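/- arXiv:0902.3037 — 2 statements merged into one kernel-verified Lean document; each statement's English description precedes it below -/
import Mathlib

section
/- Let R be a Cohen–Macaulay local ring with dualizing (canonical) module ω, and let M be a finitely generated R-module. Then M has finite ω-projective dimension if and only if M has finite injective dimension, and M has finite ω-injective dimension if and only if M has finite projective dimension. -/
open CategoryTheory TensorProduct

/-- `pdLE R n M`: the `R`-module `M` has projective dimension at most `n`,
i.e. it admits a projective resolution of length `n`. -/
def pdLE (R : Type) [CommRing R] : ℕ → (M : Type) → (iM : AddCommGroup M) → (jM : Module R M) → Prop
  | 0, M, iM, jM => Module.Projective R M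
  | n+1, M, iM, jM =>
      ∃ (P : Type) (iP : AddCommGroup P) (jP : Module R P) (f : P →ₗ[R] M),
        Module.Projective R P ∧ Function.Surjective f ∧
          pdLE R n (LinearMap.ker f) inferInstance inferInstance

/-- `idLE R n M`: `M` has injective dimension at most `n`,
i.e. it admits an injective resolution of length `n`. -/
def idLE (R : Type) [CommRing R] : ℕ → (M : Type) → (iM : AddCommGroup M) → (jM : Module R M) → Prop
  | 0, M, iM, jM => Module.Injective R M
  | n+1, M, iM, jM =>
      ∃ (I : Type) (iI : AddCommGroup I) (jI : Module R I) (f : M →ₗ[R] I),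
        Module.Injective R I ∧ Function.Injective f ∧
          idLE R n (I ⧸ LinearMap.range f) inferInstance inferInstance

/-- The projective dimension of `M`, as an element of `ℕ∞` (`⊤` means infinite). -/
noncomputable def projDim (R : Type) [CommRing R] (M : Type) [AddCommGroup M] [Module R M] : ℕ∞ :=
  sInf {n : ℕ∞ | ∃ m : ℕ, n = m ∧ pdLE R m M inferInstance inferInstance}

/-- The injective dimension of `M`, as an element of `ℕ∞`. -/
noncomputable def injDim (R : Type) [CommRing R] (M : Type) [AddCommGroup M] [Module R M] : ℕ∞ :=
  sInf {n : ℕ∞ | ∃ m : ℕ, n = m ∧ idLE R m M inferInstance inferInstance}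

/-- A commutative noetherian (local) ring is Gorenstein if it has finite injective
dimension as a module over itself. -/
def IsGorensteinRing (R : Type) [CommRing R] : Prop :=
  ∃ n : ℕ, idLE R n R inferInstance inferInstance

/-- `extGroup R M N i` : the `i`-th Ext module `Ext^i_R(M,N)`. -/
noncomputable def extGroup (R : Type) [CommRing R] (M N : Type) [AddCommGroup M] [Module R M]
    [AddCommGroup N] [Module R N] (i : ℕ) : ModuleCat R :=
  ((Ext R (ModuleCat R) i).obj (Opposite.op (ModuleCat.of R M))).obj (ModuleCat.of R N)

/-- `torGroup R M N i` : the `i`-th Tor module `Tor_i^R(M,N)`. -/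
noncomputable def torGroup (R : Type) [CommRing R] (M N : Type) [AddCommGroup M] [Module R M]
    [AddCommGroup N] [Module R N] (i : ℕ) : ModuleCat R :=
  ((Tor (ModuleCat R) i).obj (ModuleCat.of R M)).obj (ModuleCat.of R N)

/-- `C` is a semidualizing `R`-module: it is finitely generated, the homothety map
`R → Hom_R(C,C)` is bijective, and `Ext^i_R(C,C) = 0` for all `i > 0`. -/
def IsSemidualizing (R : Type) [CommRing R] (C : Type) [AddCommGroup C] [Module R C] : Prop :=
  Module.Finite R C ∧ Function.Bijective (LinearMap.lsmul R C) ∧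
    ∀ i : ℕ, 0 < i → Subsingleton (extGroup R C C i)

/-- `CpdLE R C n M` : `M` has `C`-projective dimension at most `n`, i.e. there is an exact
sequence `0 → C⊗Pₙ → ⋯ → C⊗P₀ → M → 0` with each `Pᵢ` projective. -/
def CpdLE (R C : Type) [CommRing R] [AddCommGroup C] [Module R C] :
    ℕ → (M : Type) → (iM : AddCommGroup M) → (jM : Module R M) → Prop
  | 0, M, iM, jM =>
      ∃ (P : Type) (iP : AddCommGroup P) (jP : Module R P),
        Module.Projective R P ∧ Nonempty ((TensorProduct R C P) ≃ₗ[R] M)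
  | n+1, M, iM, jM =>
      ∃ (P : Type) (iP : AddCommGroup P) (jP : Module R P)
        (f : TensorProduct R C P →ₗ[R] M),
        Module.Projective R P ∧ Function.Surjective f ∧
          CpdLE R C n (LinearMap.ker f) inferInstance inferInstance

/-- `CidLE R C n M` : `M` has `C`-injective dimension at most `n`, i.e. there is an exact
sequence `0 → M → Hom(C,I⁰) → ⋯ → Hom(C,Iⁿ) → 0` with each `Iⁱ` injective. -/
def CidLE (R C : Type) [CommRing R] [AddCommGroup C] [Module R C] :
    ℕ → (M : Type) → (iM : AddCommGroup M) → (jM : Module R M) → Prop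
  | 0, M, iM, jM =>
      ∃ (I : Type) (iI : AddCommGroup I) (jI : Module R I),
        Module.Injective R I ∧ Nonempty (M ≃ₗ[R] (C →ₗ[R] I))
  | n+1, M, iM, jM =>
      ∃ (I : Type) (iI : AddCommGroup I) (jI : Module R I)
        (f : M →ₗ[R] (C →ₗ[R] I)),
        Module.Injective R I ∧ Function.Injective f ∧
          CidLE R C n ((C →ₗ[R] I) ⧸ LinearMap.range f) inferInstance inferInstance

/-- The depth of a module over a local ring: the supremum of lengths of `M`-regular
sequences contained in the maximal ideal. -/
noncomputable def rdepth (R : Type) [CommRing R] [IsLocalRing R]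
    (M : Type) [AddCommGroup M] [Module R M] : ℕ∞ :=
  sSup {n : ℕ∞ | ∃ rs : List R, (rs.length : ℕ∞) = n ∧
    (∀ r ∈ rs, r ∈ IsLocalRing.maximalIdeal R) ∧ RingTheory.Sequence.IsRegular M rs}

/-! The argument is Foxby equivalence. For semidualizing `C`, every flat module `F` satisfies
`F ≅ Hom(C, C ⊗ F)` and `Extⁱ(C, C ⊗ F) = 0` for `i > 0`, and if `id C ≤ n` then
`id (C ⊗ F) ≤ n`. These properties pass to the cokernel of an injection `K → F`, because `C ⊗ -`
keeps it injective: a map from `C` into the kernel of `C ⊗ K → C ⊗ F` has the form `c ↦ c ⊗ k` with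
`k` in the kernel of `K → F`, and a module receiving no nonzero map from the faithful module `C` is
zero. So they hold for all modules of finite flat dimension.

Character modules `M⋆ = Hom_ℤ(M, ℚ/ℤ)` exchange injective and flat dimension over a noetherian ring,
and `Hom(C, M)⋆ ≅ C ⊗ M⋆`. If `id M` is finite, then `M⋆` has finite flat dimension, which gives
`C ⊗ Hom(C, M) ≅ M` and `id Hom(C, M)⋆ ≤ n`; for finitely generated `M` the latter means
`pd Hom(C, M) ≤ n`, and tensoring a projective resolution of `Hom(C, M)` with `C` resolves `M`.
Dually, if `pd M` is finite, then `M ≅ Hom(C, C ⊗ M)` is resolved by applying `Hom(C, -)` to an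
injective resolution of `C ⊗ M`. -/

universe u v w

open Abelian

section Module

variable {R : Type*} [CommRing R]
variable {A B D : Type*} [AddCommGroup A] [Module R A] [AddCommGroup B] [Module R B]
  [AddCommGroup D] [Module R D]

lemma exact_compRight_of_exact_of_injective (X : Type*) [AddCommGroup X] [Module R X]
    {f : A →ₗ[R] B} {g : B →ₗ[R] D} (hfg : Function.Exact f g) (hf : Function.Injective f) :
    Function.Exact (f.compRight R (M := X)) (g.compRight R (M := X)) := by
  intro ψ
  constructor
  · intro hψ
    have hmem (x : X) : ψ x ∈ LinearMap.range f := (hfg _).1 (LinearMap.congr_fun hψ x)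
    refine ⟨(LinearEquiv.ofInjective f hf).symm ∘ₗ ψ.codRestrict _ hmem, ?_⟩
    ext x
    exact congrArg Subtype.val
      ((LinearEquiv.ofInjective f hf).apply_symm_apply (ψ.codRestrict _ hmem x))
  · rintro ⟨φ, rfl⟩
    ext x
    exact hfg.apply_apply_eq_zero _

lemma subsingleton_of_subsingleton_linearMap [IsNoetherianRing R] {C T : Type*} [AddCommGroup C]
    [Module R C] [Module.Finite R C] (hC : Function.Injective (LinearMap.lsmul R C))
    [AddCommGroup T] [Module R T] [Subsingleton (C →ₗ[R] T)] : Subsingleton T := by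
  refine subsingleton_of_forall_eq 0 fun t => ?_
  let N := Submodule.span R {t}
  have : Module.Finite R N := Module.Finite.span_singleton R t
  have : Subsingleton (C →ₗ[R] N) :=
    ⟨fun _ _ => LinearMap.cancel_left N.injective_subtype |>.1 (Subsingleton.elim _ _)⟩
  -- `Hom(C, N) = 0` yields an `N`-regular element annihilating the faithful module `C`.
  obtain ⟨r, hr, hreg⟩ := IsSMulRegular.subsingleton_linearMap_iff.1 this
  have hr0 : r = 0 := hC (by
    ext c
    simpa using Module.mem_annihilator.1 hr c)
  subst hr0
  exact congrArg Subtype.val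
    (hreg (by simp) : (⟨t, Submodule.mem_span_singleton_self t⟩ : N) = 0)

lemma rTensorHomToHomRTensor_bijective_of_flat (X Y F : Type*) [AddCommGroup X] [Module R X]
    [AddCommGroup Y] [Module R Y] [AddCommGroup F] [Module R F]
    [Module.FinitePresentation R X] [Module.Flat R F] :
    Function.Bijective (rTensorHomToHomRTensor (.id R) X Y F) := by
  obtain ⟨n, m, f, g, hf, hgf⟩ := Module.FinitePresentation.exists_fin' R X
  have bijective_of_free (k : ℕ) :
      Function.Bijective (rTensorHomToHomRTensor (.id R) (Fin k → R) Y F) := by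
    rw [← rTensorHomEquivHomRTensor_toLinearMap]
    exact (rTensorHomEquivHomRTensor R (Fin k → R) Y F).bijective
  exact LinearMap.bijective_of_bijective_of_injective_of_left_exact
    ((f.lcomp R Y).rTensor F) ((g.lcomp R Y).rTensor F)
    (f.lcomp R (Y ⊗[R] F)) (g.lcomp R (Y ⊗[R] F)) _ _ _
    (by ext; simp) (by ext; simp)
    (Module.Flat.rTensor_exact F (LinearMap.exact_lcomp_of_exact_of_surjective Y hgf hf))
    (LinearMap.exact_lcomp_of_exact_of_surjective _ hgf hf)
    (bijective_of_free n) (bijective_of_free m).1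
    (Module.Flat.rTensor_preserves_injective_linearMap _
      (LinearMap.lcomp_injective_of_surjective f hf))
    (LinearMap.lcomp_injective_of_surjective f hf)

lemma lcomp_tensorProduct_surjective_of_flat {Y F : Type*} [AddCommGroup Y] [Module R Y]
    [AddCommGroup F] [Module R F] [Module.FinitePresentation R A] [Module.Flat R F]
    {f : A →ₗ[R] B} (hf : Function.Surjective (f.lcomp R Y)) :
    Function.Surjective (f.lcomp R (Y ⊗[R] F)) := by
  have naturality : f.lcomp R (Y ⊗[R] F) ∘ₗ rTensorHomToHomRTensor (.id R) B Y F =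
      rTensorHomToHomRTensor (.id R) A Y F ∘ₗ (f.lcomp R Y).rTensor F := by
    ext; simp
  refine Function.Surjective.of_comp (g := rTensorHomToHomRTensor (.id R) B Y F) ?_
  rw [← LinearMap.coe_comp, naturality]
  exact (rTensorHomToHomRTensor_bijective_of_flat A Y F).2.comp (LinearMap.rTensor_surjective F hf)

end Module

section CharacterModule

variable {R : Type*} [CommRing R]

lemma exact_characterModule_dual {A B D : Type*} [AddCommGroup A] [Module R A] [AddCommGroup B]
    [Module R B] [AddCommGroup D] [Module R D] {f : A →ₗ[R] B} {g : B →ₗ[R] D}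
    (hfg : Function.Exact f g) :
    Function.Exact (CharacterModule.dual g) (CharacterModule.dual f) := by
  intro χ
  constructor
  · intro hχ
    have hker (b : B) (hb : b ∈ LinearMap.ker g) : χ b = 0 := by
      obtain ⟨a, rfl⟩ := (hfg b).1 hb
      exact DFunLike.congr_fun hχ a
    let χ' : CharacterModule (B ⧸ LinearMap.ker g) :=
      QuotientAddGroup.lift (LinearMap.ker g).toAddSubgroup χ hker
    have hinj : Function.Injective ((LinearMap.ker g).liftQ g le_rfl) :=
      LinearMap.ker_eq_bot.1 (Submodule.ker_liftQ_eq_bot _ _ _ le_rfl)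
    obtain ⟨ψ, hψ⟩ := CharacterModule.dual_surjective_of_injective _ hinj χ'
    refine ⟨ψ, ?_⟩
    ext b
    exact DFunLike.congr_fun hψ (Submodule.Quotient.mk b)
  · rintro ⟨ψ, rfl⟩
    ext a
    exact (congrArg ψ (hfg.apply_apply_eq_zero a)).trans (map_zero ψ)

/-- The homomorphism evaluation map `X ⊗ M⋆ → Hom(X, M)⋆`, sending `x ⊗ χ` to `φ ↦ χ (φ x)`.
It is an isomorphism for finitely presented `X`, which turns statements about `Hom` and injective
modules into statements about `⊗` and flat modules. -/
noncomputable def homEvaluation (X M : Type*) [AddCommGroup X] [Module R X]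
    [AddCommGroup M] [Module R M] :
    X ⊗[R] CharacterModule M →ₗ[R] CharacterModule (X →ₗ[R] M) :=
  TensorProduct.lift
    { toFun x := CharacterModule.dual (LinearMap.applyₗ x)
      map_add' x y := by
        ext χ φ
        exact (congrArg χ (map_add φ x y)).trans (map_add χ _ _)
      map_smul' r x := by
        ext χ φ
        exact congrArg χ (map_smul φ r x) }

variable {X X' M : Type*} [AddCommGroup X] [Module R X] [AddCommGroup X'] [Module R X']
  [AddCommGroup M] [Module R M]

lemma homEvaluation_naturality (f : X →ₗ[R] X') :
    CharacterModule.dual (f.lcomp R M) ∘ₗ homEvaluation X M =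
      homEvaluation X' M ∘ₗ f.rTensor (CharacterModule M) := by
  ext x χ φ
  rfl

lemma sum_smulRight_proj_single {ι : Type*} [Fintype ι] [DecidableEq ι] (φ : (ι → R) →ₗ[R] M) :
    ∑ i, (LinearMap.proj i).smulRight (φ (Pi.single i 1)) = φ := by
  ext i
  simp [Pi.single_apply]

lemma homEvaluation_bijective_of_pi (ι : Type*) [Finite ι] :
    Function.Bijective (homEvaluation (R := R) (ι → R) M) := by
  classical
  have := Fintype.ofFinite ι
  let coord (i : ι) : CharacterModule ((ι → R) →ₗ[R] M) →ₗ[R] CharacterModule M :=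
    CharacterModule.dual (LinearMap.smulRightₗ (LinearMap.proj i))
  let inverse : CharacterModule ((ι → R) →ₗ[R] M) →ₗ[R] (ι → R) ⊗[R] CharacterModule M :=
    ∑ i, TensorProduct.mk R _ _ (Pi.single i 1) ∘ₗ coord i
  have coord_homEvaluation (i j : ι) (χ : CharacterModule M) :
      coord j (homEvaluation (ι → R) M (Pi.single i 1 ⊗ₜ[R] χ)) =
        (Pi.single i 1 : ι → R) j • χ := by
    ext m
    rfl
  have left_inv : inverse ∘ₗ homEvaluation (ι → R) M = LinearMap.id := by
    ext i χ : 5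
    simp [inverse, coord_homEvaluation, Pi.single_apply, TensorProduct.tmul_ite]
  have right_inv : homEvaluation (ι → R) M ∘ₗ inverse = LinearMap.id := by
    ext ψ φ
    have h (i : ι) : homEvaluation (ι → R) M (Pi.single i 1 ⊗ₜ[R] coord i ψ) φ =
        ψ ((LinearMap.proj i).smulRight (φ (Pi.single i 1))) := rfl
    conv_rhs => rw [← sum_smulRight_proj_single φ]
    simp only [inverse, LinearMap.comp_apply, LinearMap.sum_apply, map_sum, TensorProduct.mk_apply,
      LinearMap.id_coe, id_eq, ← h]
    exact AddMonoidHom.finsetSum_apply _ _ _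
  exact Function.bijective_iff_has_inverse.2
    ⟨inverse, LinearMap.congr_fun left_inv, LinearMap.congr_fun right_inv⟩

lemma homEvaluation_bijective (X M : Type*) [AddCommGroup X] [Module R X] [AddCommGroup M]
    [Module R M] [Module.FinitePresentation R X] :
    Function.Bijective (homEvaluation (R := R) X M) := by
  obtain ⟨n, m, f, g, hf, hgf⟩ := Module.FinitePresentation.exists_fin' R X
  exact LinearMap.bijective_of_surjective_of_bijective_of_right_exact
    (g.rTensor _) (f.rTensor _) (CharacterModule.dual (g.lcomp R M))
    (CharacterModule.dual (f.lcomp R M)) _ _ _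
    (homEvaluation_naturality g) (homEvaluation_naturality f)
    (rTensor_exact _ hgf hf)
    (exact_characterModule_dual (LinearMap.exact_lcomp_of_exact_of_surjective M hgf hf))
    (homEvaluation_bijective_of_pi (Fin m)).2 (homEvaluation_bijective_of_pi (Fin n))
    (LinearMap.rTensor_surjective _ hf)
    (CharacterModule.dual_surjective_of_injective _
      (LinearMap.lcomp_injective_of_surjective f hf))

lemma flat_characterModule_of_baer [IsNoetherianRing R] (hM : Module.Baer R M) :
    Module.Flat R (CharacterModule M) := by
  rw [Module.Flat.iff_rTensor_injective]
  intro J _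
  have := Module.finitePresentation_of_finite R J
  refine Function.Injective.of_comp (f := homEvaluation R M) ?_
  rw [← LinearMap.coe_comp, ← homEvaluation_naturality, LinearMap.coe_comp]
  refine (CharacterModule.dual_injective_of_surjective _ fun φ => ?_).comp
    (homEvaluation_bijective J M).1
  obtain ⟨ψ, hψ⟩ := hM J φ
  exact ⟨ψ, LinearMap.ext fun x => hψ x x.2⟩

end CharacterModule

section HomTensorAdjunction

variable {R : Type*} [CommRing R] {C : Type*} [AddCommGroup C] [Module R C]

variable (R C) in
/-- The unit `G → Hom(C, C ⊗ G)` of the tensor-hom adjunction. -/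
abbrev tensorHomUnit (G : Type*) [AddCommGroup G] [Module R G] : G →ₗ[R] C →ₗ[R] C ⊗[R] G :=
  (TensorProduct.mk R C G).flip

variable (R C) in
/-- The counit `C ⊗ Hom(C, M) → M` of the tensor-hom adjunction. -/
noncomputable abbrev tensorHomCounit (M : Type*) [AddCommGroup M] [Module R M] :
    C ⊗[R] (C →ₗ[R] M) →ₗ[R] M :=
  TensorProduct.lift LinearMap.applyₗ

lemma tensorHomCounit_bijective_iff [Module.FinitePresentation R C] {M : Type*} [AddCommGroup M]
    [Module R M] : Function.Bijective (tensorHomCounit R C M) ↔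
      Function.Bijective (tensorHomUnit R C (CharacterModule M)) := by
  let e : (C →ₗ[R] C ⊗[R] CharacterModule M) ≃ₗ[R] CharacterModule (C ⊗[R] (C →ₗ[R] M)) :=
    (LinearEquiv.congrRight (LinearEquiv.ofBijective _ (homEvaluation_bijective C M))).trans
      CharacterModule.homEquiv
  have dual_counit : CharacterModule.dual (tensorHomCounit R C M) =
      e.toLinearMap ∘ₗ tensorHomUnit R C (CharacterModule M) := by
    ext χ z
    induction z using TensorProduct.induction_on with
    | zero => rw [map_zero, map_zero]
    | tmul c φ => rfl
    | add x y hx hy => rw [map_add, hx, hy, map_add]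
  rw [← CharacterModule.dual_bijective_iff_bijective, dual_counit, LinearMap.coe_comp]
  exact e.bijective.of_comp_iff' _

end HomTensorAdjunction

section ShortExact

variable {𝒜 : Type u} [Category.{v} 𝒜] [Abelian 𝒜] [HasExt.{w} 𝒜] {S : ShortComplex 𝒜}
  (hS : S.ShortExact)

include hS

lemma subsingleton_ext_X₃ (X : 𝒜) (n : ℕ) [Subsingleton (Ext X S.X₂ n)]
    [Subsingleton (Ext X S.X₁ (n + 1))] : Subsingleton (Ext X S.X₃ n) := by
  refine subsingleton_of_forall_eq 0 fun x => ?_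
  obtain ⟨y, rfl⟩ := Ext.covariant_sequence_exact₃ X hS x rfl (Subsingleton.elim _ _)
  rw [Subsingleton.elim y 0, Ext.zero_comp]

lemma exists_lift_of_subsingleton_ext {X : 𝒜} [Subsingleton (Ext X S.X₁ 1)] (φ : X ⟶ S.X₃) :
    ∃ ψ : X ⟶ S.X₂, ψ ≫ S.g = φ := by
  obtain ⟨x, hx⟩ := Ext.covariant_sequence_exact₃ X hS (Ext.mk₀ φ) rfl (Subsingleton.elim _ _)
  obtain ⟨ψ, rfl⟩ := (Ext.mk₀_bijective _ _).2 x
  exact ⟨ψ, (Ext.mk₀_bijective _ _).1 (by rw [← Ext.mk₀_comp_mk₀, hx])⟩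

variable [Projective S.X₂]

lemma subsingleton_ext_X₁_iff (Y : 𝒜) (n : ℕ) :
    Subsingleton (Ext S.X₁ Y (n + 1)) ↔ Subsingleton (Ext S.X₃ Y (n + 2)) := by
  constructor <;> intro _ <;> refine subsingleton_of_forall_eq 0 fun x => ?_
  · obtain ⟨y, rfl⟩ := Ext.contravariant_sequence_exact₃ hS Y x (Ext.eq_zero_of_projective _)
      (n₀ := n + 1) (by lia)
    rw [Subsingleton.elim y 0, Ext.comp_zero]
  · obtain ⟨y, rfl⟩ := Ext.contravariant_sequence_exact₁ hS Y x (n₁ := n + 2) (by lia)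
      (Subsingleton.elim _ _)
    rw [Ext.eq_zero_of_projective y, Ext.comp_zero]

lemma forall_exists_extension_iff_subsingleton_ext (Y : 𝒜) :
    (∀ φ : S.X₁ ⟶ Y, ∃ ψ : S.X₂ ⟶ Y, S.f ≫ ψ = φ) ↔ Subsingleton (Ext S.X₃ Y 1) := by
  constructor
  · refine fun extension => subsingleton_of_forall_eq 0 fun x => ?_
    obtain ⟨y, rfl⟩ := Ext.contravariant_sequence_exact₃ hS Y x (Ext.eq_zero_of_projective _)
      (n₀ := 0) rfl
    obtain ⟨φ, rfl⟩ := (Ext.mk₀_bijective _ _).2 y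
    obtain ⟨ψ, rfl⟩ := extension φ
    rw [← Ext.mk₀_comp_mk₀, ← Ext.comp_assoc_of_second_deg_zero, hS.extClass_comp, Ext.zero_comp]
  · intro _ φ
    obtain ⟨x, hx⟩ := Ext.contravariant_sequence_exact₁ hS Y (Ext.mk₀ φ) (n₁ := 1) rfl
      (Subsingleton.elim _ _)
    obtain ⟨ψ, rfl⟩ := (Ext.mk₀_bijective _ _).2 x
    exact ⟨ψ, (Ext.mk₀_bijective _ _).1 (by rw [← Ext.mk₀_comp_mk₀, hx])⟩

end ShortExact

section InjectiveDimension

variable {R : Type u} [CommRing R] {A B D X Y : Type u} [AddCommGroup A] [Module R A]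
  [AddCommGroup B] [Module R B] [AddCommGroup D] [Module R D] [AddCommGroup X] [Module R X]
  [AddCommGroup Y] [Module R Y] {f : A →ₗ[R] B} {g : B →ₗ[R] D}

lemma shortExact_of_linearMap (hfg : Function.Exact f g) (hf : Function.Injective f)
    (hg : Function.Surjective g) :
    (ModuleCat.shortComplexOfCompEqZero f g hfg.linearMap_comp_eq_zero).ShortExact :=
  ModuleCat.shortComplex_shortExact _ hfg hf hg

lemma compRight_surjective_of_subsingleton_ext (hfg : Function.Exact f g)
    (hf : Function.Injective f) (hg : Function.Surjective g)
    (hX : Subsingleton (Ext (ModuleCat.of R X) (ModuleCat.of R A) 1)) :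
    Function.Surjective (g.compRight R (M := X)) := by
  intro φ
  obtain ⟨ψ, hψ⟩ := exists_lift_of_subsingleton_ext (shortExact_of_linearMap hfg hf hg)
    (ModuleCat.ofHom φ)
  exact ⟨ψ.hom, congrArg ModuleCat.Hom.hom hψ⟩

lemma lcomp_surjective_iff_subsingleton_ext [Module.Projective R B] (hfg : Function.Exact f g)
    (hf : Function.Injective f) (hg : Function.Surjective g) :
    Function.Surjective (f.lcomp R Y) ↔
      Subsingleton (Ext (ModuleCat.of R D) (ModuleCat.of R Y) 1) := by
  have hS := shortExact_of_linearMap hfg hf hg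
  have : Projective (ModuleCat.of R B) := (IsProjective.iff_projective _).1 inferInstance
  rw [← forall_exists_extension_iff_subsingleton_ext hS]
  constructor
  · intro hsurj φ
    obtain ⟨ψ, hψ⟩ := hsurj φ.hom
    exact ⟨ModuleCat.ofHom ψ, ModuleCat.hom_ext hψ⟩
  · intro extension φ
    obtain ⟨ψ, hψ⟩ := extension (ModuleCat.ofHom φ)
    exact ⟨ψ.hom, congrArg ModuleCat.Hom.hom hψ⟩

lemma subsingleton_ext_succ_iff_of_exact [Module.Projective R B] (hfg : Function.Exact f g)
    (hf : Function.Injective f) (hg : Function.Surjective g) (n : ℕ) :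
    Subsingleton (Ext (ModuleCat.of R A) (ModuleCat.of R Y) (n + 1)) ↔
      Subsingleton (Ext (ModuleCat.of R D) (ModuleCat.of R Y) (n + 2)) := by
  have : Projective (ModuleCat.of R B) := (IsProjective.iff_projective _).1 inferInstance
  exact subsingleton_ext_X₁_iff (shortExact_of_linearMap hfg hf hg) _ n

lemma hasInjectiveDimensionLE_of_exact (hfg : Function.Exact f g)
    (hf : Function.Injective f) (hg : Function.Surjective g) {n : ℕ}
    (hA : HasInjectiveDimensionLE (ModuleCat.of R A) n)
    (hB : HasInjectiveDimensionLE (ModuleCat.of R B) n) :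
    HasInjectiveDimensionLE (ModuleCat.of R D) n := by
  have := hA
  exact (shortExact_of_linearMap hfg hf hg).hasInjectiveDimensionLT_X₃ _ hB
    (hasInjectiveDimensionLT_of_ge (ModuleCat.of R A) (n + 1) (n + 2) (Nat.le_succ _))

lemma hasInjectiveDimensionLE_iff_succ_of_exact [Module.Injective R B] (hfg : Function.Exact f g)
    (hf : Function.Injective f) (hg : Function.Surjective g) (n : ℕ) :
    HasInjectiveDimensionLE (ModuleCat.of R D) n ↔
      HasInjectiveDimensionLE (ModuleCat.of R A) (n + 1) :=
  (shortExact_of_linearMap hfg hf hg).hasInjectiveDimensionLT_X₃_iff n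
    ((Module.injective_iff_injective_object R B).1 inferInstance)

lemma hasInjectiveDimensionLE_zero_iff :
    HasInjectiveDimensionLE (ModuleCat.of R A) 0 ↔ Module.Injective R A :=
  injective_iff_hasInjectiveDimensionLT_one.symm.trans
    (Module.injective_iff_injective_object R A).symm

variable (R Y) in
lemma exists_injective_embedding : ∃ (I : Type u) (_ : AddCommGroup I) (_ : Module R I)
    (f : Y →ₗ[R] I), Module.Injective R I ∧ Function.Injective f := by
  obtain ⟨I, hI, f, _⟩ := EnoughInjectives.presentation (ModuleCat.of R Y)
  exact ⟨I, inferInstance, inferInstance, f.hom, (Module.injective_iff_injective_object R I).2 hI,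
    (ModuleCat.mono_iff_injective f).1 ‹_›⟩

lemma hasInjectiveDimensionLE_of_subsingleton_ext_quotient (n : ℕ)
    (hY : ∀ J : Ideal R, Subsingleton (Ext (ModuleCat.of R (R ⧸ J)) (ModuleCat.of R Y) (n + 1))) :
    HasInjectiveDimensionLE (ModuleCat.of R Y) n := by
  induction n generalizing Y with
  | zero =>
    rw [hasInjectiveDimensionLE_zero_iff, ← Module.Baer.iff_injective]
    intro J φ
    obtain ⟨ψ, hψ⟩ := (lcomp_surjective_iff_subsingleton_ext
      (LinearMap.exact_subtype_mkQ J) J.injective_subtype J.mkQ_surjective).2 (hY J) φ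
    exact ⟨ψ, fun x hx => LinearMap.congr_fun hψ ⟨x, hx⟩⟩
  | succ n ih =>
    obtain ⟨I, _, _, f, hI, hf⟩ := exists_injective_embedding R Y
    have hex := f.exact_map_mkQ_range
    have hsurj := (LinearMap.range f).mkQ_surjective
    have : Injective (ModuleCat.of R I) := (Module.injective_iff_injective_object R I).1 hI
    refine (hasInjectiveDimensionLE_iff_succ_of_exact hex hf hsurj n).1 (ih fun J => ?_)
    have := hY J
    have := Abelian.Ext.subsingleton_of_injective (ModuleCat.of R (R ⧸ J)) (ModuleCat.of R I) n
    exact subsingleton_ext_X₃ (shortExact_of_linearMap hex hf hsurj) _ _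

variable [IsNoetherianRing R] {F : Type u} [AddCommGroup F] [Module R F] [Module.Flat R F]

lemma subsingleton_ext_tensorProduct_of_flat [Module.Finite R X] (n : ℕ)
    (hXY : Subsingleton (Ext (ModuleCat.of R X) (ModuleCat.of R Y) (n + 1))) :
    Subsingleton (Ext (ModuleCat.of R X) (ModuleCat.of R (Y ⊗[R] F)) (n + 1)) := by
  induction n generalizing X with
  | zero =>
    obtain ⟨k, p, hp⟩ := Module.Finite.exists_fin' R X
    have := Module.finitePresentation_of_finite R (LinearMap.ker p)
    rw [zero_add, ← lcomp_surjective_iff_subsingleton_ext p.exact_subtype_ker_map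
      (LinearMap.ker p).injective_subtype hp] at hXY ⊢
    exact lcomp_tensorProduct_surjective_of_flat hXY
  | succ n ih =>
    obtain ⟨k, p, hp⟩ := Module.Finite.exists_fin' R X
    rw [← subsingleton_ext_succ_iff_of_exact p.exact_subtype_ker_map
      (LinearMap.ker p).injective_subtype hp] at hXY ⊢
    exact ih hXY

lemma hasInjectiveDimensionLE_tensorProduct_of_flat {n : ℕ}
    (hY : HasInjectiveDimensionLE (ModuleCat.of R Y) n) :
    HasInjectiveDimensionLE (ModuleCat.of R (Y ⊗[R] F)) n :=
  hasInjectiveDimensionLE_of_subsingleton_ext_quotient n fun _ =>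
    subsingleton_ext_tensorProduct_of_flat n (hY.subsingleton _ _ _ le_rfl _)

end InjectiveDimension

section AuslanderClass

variable {R : Type u} [CommRing R] {C : Type u} [AddCommGroup C] [Module R C]
  {K F G : Type u} [AddCommGroup K] [Module R K] [AddCommGroup F] [Module R F]
  [AddCommGroup G] [Module R G] {f : K →ₗ[R] F} {g : F →ₗ[R] G}

variable (R C G) in
/-- Membership of `G` in the Auslander class of `C`. The usual third condition, the vanishing of
`Tor` of `C` and `G` in positive degrees, is left out: when `C` is semidualizing, closure of the
class under cokernels of injections does not depend on it. -/
structure IsAuslander : Prop where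
  unit_bijective : Function.Bijective (tensorHomUnit R C G)
  subsingleton_ext (i : ℕ) :
    Subsingleton (Ext (ModuleCat.of R C) (ModuleCat.of R (C ⊗[R] G)) (i + 1))

lemma IsAuslander.lTensor_injective [IsNoetherianRing R] [Module.Finite R C]
    (hC : Function.Injective (LinearMap.lsmul R C)) (hf : Function.Injective f)
    (hK : IsAuslander R C K) (hF : IsAuslander R C F) : Function.Injective (f.lTensor C) := by
  have subsingleton_hom_ker : Subsingleton (C →ₗ[R] LinearMap.ker (f.lTensor C)) := by
    refine subsingleton_of_forall_eq 0 fun φ => ?_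
    obtain ⟨k, hk⟩ := hK.unit_bijective.2 ((LinearMap.ker (f.lTensor C)).subtype ∘ₗ φ)
    have tmul_eq (c : C) : c ⊗ₜ[R] k = φ c := LinearMap.congr_fun hk c
    have unit_eq_zero : tensorHomUnit R C F (f k) = 0 := by
      ext c
      have : f.lTensor C (c ⊗ₜ[R] k) = 0 := tmul_eq c ▸ (φ c).2
      simpa using this
    have hfk : f k = 0 := hF.unit_bijective.1 (unit_eq_zero.trans (map_zero _).symm)
    have hk0 : k = 0 := hf (hfk.trans (map_zero f).symm)
    ext c
    simp [← tmul_eq, hk0]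
  rw [← LinearMap.ker_eq_bot, ← Submodule.subsingleton_iff_eq_bot]
  exact subsingleton_of_subsingleton_linearMap hC

lemma IsAuslander.of_exact (hfg : Function.Exact f g) (hg : Function.Surjective g)
    (hinj : Function.Injective (f.lTensor C)) (hK : IsAuslander R C K) (hF : IsAuslander R C F) :
    IsAuslander R C G := by
  have hex := lTensor_exact C hfg hg
  have hsurj := LinearMap.lTensor_surjective C hg
  refine ⟨?_, fun i => ?_⟩
  · exact LinearMap.bijective_of_surjective_of_bijective_of_right_exact f g
      ((f.lTensor C).compRight R (M := C)) ((g.lTensor C).compRight R (M := C)) _ _ _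
      (by ext; rfl) (by ext; rfl) hfg (exact_compRight_of_exact_of_injective C hex hinj)
      hK.unit_bijective.2 hF.unit_bijective hg
      (compRight_surjective_of_subsingleton_ext hex hinj hsurj (hK.subsingleton_ext 0))
  · have := hK.subsingleton_ext (i + 1)
    have := hF.subsingleton_ext i
    exact subsingleton_ext_X₃ (shortExact_of_linearMap hex hinj hsurj) _ _

variable (R) in
/-- Modules with a finite flat resolution: the smallest class containing the flat modules and the
cokernels of injections from a member into a flat module. -/
inductive HasFiniteFlatDimension : (G : Type u) → [AddCommGroup G] → [Module R G] → Prop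
  | of_flat (F : Type u) [AddCommGroup F] [Module R F] [Module.Flat R F] : HasFiniteFlatDimension F
  | of_exact {K F G : Type u} [AddCommGroup K] [Module R K] [AddCommGroup F] [Module R F]
      [AddCommGroup G] [Module R G] [Module.Flat R F] {f : K →ₗ[R] F} {g : F →ₗ[R] G}
      (hfg : Function.Exact f g) (hf : Function.Injective f) (hg : Function.Surjective g)
      (hK : HasFiniteFlatDimension K) : HasFiniteFlatDimension G

end AuslanderClass

section Semidualizing

variable {R : Type} [CommRing R] {C : Type} [AddCommGroup C] [Module R C]

lemma subsingleton_ext_of_extGroup {X Y : Type} [AddCommGroup X] [Module R X] [AddCommGroup Y]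
    [Module R Y] {n : ℕ} (h : Subsingleton (extGroup R X Y (n + 1))) :
    Subsingleton (Ext (ModuleCat.of R X) (ModuleCat.of R Y) (n + 1)) := by
  let P := ProjectiveResolution.of (ModuleCat.of R X)
  have homology_isZero :
      Limits.IsZero ((P.complex.linearYonedaObj R (ModuleCat.of R Y)).homology (n + 1)) :=
    (ModuleCat.isZero_of_subsingleton (extGroup R X Y (n + 1))).of_iso
      (P.isoExt (n + 1) (ModuleCat.of R Y)).symm
  rw [← HomologicalComplex.exactAt_iff_isZero_homology,
    HomologicalComplex.exactAt_iff' _ n (n + 1) (n + 2) (by simp) (by simp),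
    ShortComplex.moduleCat_exact_iff] at homology_isZero
  refine subsingleton_of_forall_eq 0 fun α => ?_
  obtain ⟨f, hf, rfl⟩ := P.extMk_surjective α (n + 2) rfl
  rw [P.extMk_eq_zero_iff f (n + 2) rfl hf n rfl]
  exact homology_isZero f hf

variable [IsNoetherianRing R]

lemma IsSemidualizing.isAuslander_of_flat (hC : IsSemidualizing R C) (F : Type) [AddCommGroup F]
    [Module R F] [Module.Flat R F] : IsAuslander R C F where
  unit_bijective := by
    have := hC.1
    have := Module.finitePresentation_of_finite R C
    have unit_eq : tensorHomUnit R C F =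
        rTensorHomToHomRTensor (.id R) C C F ∘ₗ (LinearMap.lsmul R C).rTensor F ∘ₗ
          (TensorProduct.lid R F).symm.toLinearMap := by
      ext
      simp
    rw [unit_eq]
    exact (rTensorHomToHomRTensor_bijective_of_flat C C F).comp
      (((LinearEquiv.ofBijective _ hC.2.1).rTensor F).bijective.comp
        (TensorProduct.lid R F).symm.bijective)
  subsingleton_ext i := by
    have := hC.1
    exact subsingleton_ext_tensorProduct_of_flat i
      (subsingleton_ext_of_extGroup (hC.2.2 (i + 1) i.succ_pos))

variable {G : Type} [AddCommGroup G] [Module R G]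

lemma IsSemidualizing.isAuslander (hC : IsSemidualizing R C) (hG : HasFiniteFlatDimension R G) :
    IsAuslander R C G := by
  induction hG with
  | of_flat F => exact hC.isAuslander_of_flat F
  | of_exact hfg hf hg _ ih =>
    have := hC.1
    exact .of_exact hfg hg (ih.lTensor_injective hC.2.1.1 hf (hC.isAuslander_of_flat _)) ih
      (hC.isAuslander_of_flat _)

lemma IsSemidualizing.lTensor_injective {F : Type} [AddCommGroup F] [Module R F] [Module.Flat R F]
    {f : G →ₗ[R] F} (hC : IsSemidualizing R C) (hG : HasFiniteFlatDimension R G)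
    (hf : Function.Injective f) : Function.Injective (f.lTensor C) :=
  have := hC.1
  (hC.isAuslander hG).lTensor_injective hC.2.1.1 hf (hC.isAuslander_of_flat F)

lemma IsSemidualizing.hasInjectiveDimensionLE_tensorProduct (hC : IsSemidualizing R C) {n : ℕ}
    (hid : HasInjectiveDimensionLE (ModuleCat.of R C) n) (hG : HasFiniteFlatDimension R G) :
    HasInjectiveDimensionLE (ModuleCat.of R (C ⊗[R] G)) n := by
  induction hG with
  | of_flat F => exact hasInjectiveDimensionLE_tensorProduct_of_flat hid
  | of_exact hfg hf hg hK ih =>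
    exact hasInjectiveDimensionLE_of_exact (lTensor_exact C hfg hg) (hC.lTensor_injective hK hf)
      (LinearMap.lTensor_surjective C hg) ih (hasInjectiveDimensionLE_tensorProduct_of_flat hid)

end Semidualizing

section ResolutionDimension

variable {R : Type} [CommRing R] {C : Type} [AddCommGroup C] [Module R C]
  {M : Type} {iM : AddCommGroup M} {jM : Module R M}

lemma idLE_iff_hasInjectiveDimensionLE {n : ℕ} :
    idLE R n M iM jM ↔ HasInjectiveDimensionLE (ModuleCat.of R M) n := by
  induction n generalizing M with
  | zero => exact hasInjectiveDimensionLE_zero_iff.symm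
  | succ n ih =>
    constructor
    · rintro ⟨I, _, _, f, hI, hf, h⟩
      exact (hasInjectiveDimensionLE_iff_succ_of_exact f.exact_map_mkQ_range hf
        (Submodule.mkQ_surjective _) n).1 (ih.1 h)
    · intro h
      obtain ⟨I, iI, jI, f, hI, hf⟩ := exists_injective_embedding R M
      exact ⟨I, iI, jI, f, hI, hf, ih.2 ((hasInjectiveDimensionLE_iff_succ_of_exact
        f.exact_map_mkQ_range hf (Submodule.mkQ_surjective _) n).2 h)⟩

lemma CpdLE.congr {n : ℕ} {N : Type} {iN : AddCommGroup N} {jN : Module R N}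
    (h : CpdLE R C n M iM jM) (e : M ≃ₗ[R] N) : CpdLE R C n N iN jN := by
  cases n with
  | zero =>
    obtain ⟨P, iP, jP, hP, ⟨e'⟩⟩ := h
    exact ⟨P, iP, jP, hP, ⟨e'.trans e⟩⟩
  | succ n =>
    obtain ⟨P, iP, jP, f, hP, hf, h⟩ := h
    refine ⟨P, iP, jP, e.toLinearMap ∘ₗ f, hP, e.surjective.comp hf, ?_⟩
    rwa [LinearEquiv.ker_comp]

lemma pdLE.hasFiniteFlatDimension {n : ℕ} (h : pdLE R n M iM jM) : HasFiniteFlatDimension R M := by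
  induction n generalizing M with
  | zero =>
    have : Module.Projective R M := h
    exact .of_flat M
  | succ n ih =>
    obtain ⟨P, iP, jP, f, hP, hf, h⟩ := h
    exact .of_exact f.exact_subtype_ker_map Subtype.val_injective hf (ih h)

lemma CidLE.of_idLE {n : ℕ} {L : Type} {iL : AddCommGroup L} {jL : Module R L}
    (h : idLE R n L iL jL)
    (hext : ∀ i : ℕ, Subsingleton (Ext (ModuleCat.of R C) (ModuleCat.of R L) (i + 1)))
    (e : M ≃ₗ[R] (C →ₗ[R] L)) : CidLE R C n M iM jM := by
  induction n generalizing L M with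
  | zero => exact ⟨L, iL, jL, h, ⟨e⟩⟩
  | succ n ih =>
    obtain ⟨I, iI, jI, f, hI, hf, h⟩ := h
    have : Injective (ModuleCat.of R I) := (Module.injective_iff_injective_object R I).1 hI
    have hex := f.exact_map_mkQ_range
    have hsurj := (LinearMap.range f).mkQ_surjective
    have hex' : Function.Exact (f.compRight R (M := C) ∘ₗ e.toLinearMap)
        ((LinearMap.range f).mkQ.compRight R (M := C)) := by
      rw [LinearMap.exact_iff, LinearEquiv.range_comp, ← LinearMap.exact_iff]
      exact exact_compRight_of_exact_of_injective C hex hf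
    have hsurj' := compRight_surjective_of_subsingleton_ext hex hf hsurj (hext 0)
    have hinj : Function.Injective (f.compRight R (M := C)) :=
      fun _ _ => (LinearMap.cancel_left hf).1
    refine ⟨I, iI, jI, f.compRight R (M := C) ∘ₗ e.toLinearMap, hI, hinj.comp e.injective,
      ih h (fun i => ?_) (hex'.linearEquivOfSurjective hsurj')⟩
    have := hext (i + 1)
    have := Ext.subsingleton_of_injective (ModuleCat.of R C) (ModuleCat.of R I) i
    exact subsingleton_ext_X₃ (shortExact_of_linearMap hex hf hsurj) _ _

variable [IsNoetherianRing R]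

lemma idLE.hasFiniteFlatDimension_characterModule {n : ℕ} (h : idLE R n M iM jM) :
    HasFiniteFlatDimension R (CharacterModule M) := by
  induction n generalizing M with
  | zero =>
    have := flat_characterModule_of_baer (Module.Baer.iff_injective.2 h)
    exact .of_flat _
  | succ n ih =>
    obtain ⟨I, iI, jI, f, hI, hf, h⟩ := h
    have := flat_characterModule_of_baer (Module.Baer.iff_injective.2 hI)
    exact .of_exact (exact_characterModule_dual f.exact_map_mkQ_range)
      (CharacterModule.dual_injective_of_surjective _ (Submodule.mkQ_surjective _))
      (CharacterModule.dual_surjective_of_injective _ hf) (ih h)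

lemma pdLE_of_hasInjectiveDimensionLE_characterModule {n : ℕ} [Module.Finite R M]
    (h : HasInjectiveDimensionLE (ModuleCat.of R (CharacterModule M)) n) : pdLE R n M iM jM := by
  induction n generalizing M with
  | zero =>
    have : Module.Flat R M :=
      Module.Flat.iff_characterModule_injective.2 (hasInjectiveDimensionLE_zero_iff.1 h)
    have := Module.finitePresentation_of_finite R M
    exact Module.Flat.projective_of_finitePresentation
  | succ n ih =>
    obtain ⟨k, p, hp⟩ := Module.Finite.exists_fin' R M
    have : Module.Injective R (CharacterModule (Fin k → R)) :=
      Module.Flat.iff_characterModule_injective.1 inferInstance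
    exact ⟨Fin k → R, inferInstance, inferInstance, p, inferInstance, hp,
      ih ((hasInjectiveDimensionLE_iff_succ_of_exact
        (exact_characterModule_dual p.exact_subtype_ker_map)
        (CharacterModule.dual_injective_of_surjective _ hp)
        (CharacterModule.dual_surjective_of_injective _ Subtype.val_injective) n).2 h)⟩

end ResolutionDimension

section Duality

variable {R : Type} [CommRing R] [IsNoetherianRing R] {C : Type} [AddCommGroup C] [Module R C]
  {M : Type} {iM : AddCommGroup M} {jM : Module R M} {m n : ℕ}

lemma CpdLE.hasInjectiveDimensionLE (hid : HasInjectiveDimensionLE (ModuleCat.of R C) n)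
    (h : CpdLE R C m M iM jM) : HasInjectiveDimensionLE (ModuleCat.of R M) n := by
  induction m generalizing M with
  | zero =>
    obtain ⟨P, _, _, _, ⟨e⟩⟩ := h
    exact (ModuleCat.hasInjectiveDimensionLE_iff_of_linearEquiv e n).1
      (hasInjectiveDimensionLE_tensorProduct_of_flat hid)
  | succ m ih =>
    obtain ⟨P, _, _, f, _, hf, h⟩ := h
    exact hasInjectiveDimensionLE_of_exact f.exact_subtype_ker_map Subtype.val_injective hf
      (ih h) (hasInjectiveDimensionLE_tensorProduct_of_flat hid)

lemma hasInjectiveDimensionLE_characterModule_linearMap [Module.Finite R C] {I : Type}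
    [AddCommGroup I] [Module R I] (hid : HasInjectiveDimensionLE (ModuleCat.of R C) n)
    (hI : Module.Injective R I) :
    HasInjectiveDimensionLE (ModuleCat.of R (CharacterModule (C →ₗ[R] I))) n := by
  have := Module.finitePresentation_of_finite R C
  have := flat_characterModule_of_baer (Module.Baer.iff_injective.2 hI)
  exact (ModuleCat.hasInjectiveDimensionLE_iff_of_linearEquiv
    (LinearEquiv.ofBijective _ (homEvaluation_bijective C I)) n).1
    (hasInjectiveDimensionLE_tensorProduct_of_flat hid)

lemma CidLE.hasInjectiveDimensionLE_characterModule [Module.Finite R C]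
    (hid : HasInjectiveDimensionLE (ModuleCat.of R C) n) (h : CidLE R C m M iM jM) :
    HasInjectiveDimensionLE (ModuleCat.of R (CharacterModule M)) n := by
  induction m generalizing M with
  | zero =>
    obtain ⟨I, _, _, hI, ⟨e⟩⟩ := h
    exact (ModuleCat.hasInjectiveDimensionLE_iff_of_linearEquiv (CharacterModule.congr e.symm) n).1
      (hasInjectiveDimensionLE_characterModule_linearMap hid hI)
  | succ m ih =>
    obtain ⟨I, _, _, f, hI, hf, h⟩ := h
    exact hasInjectiveDimensionLE_of_exact (exact_characterModule_dual f.exact_map_mkQ_range)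
      (CharacterModule.dual_injective_of_surjective _ (Submodule.mkQ_surjective _))
      (CharacterModule.dual_surjective_of_injective _ hf) (ih h)
      (hasInjectiveDimensionLE_characterModule_linearMap hid hI)

lemma IsSemidualizing.cpdLE_tensorProduct (hC : IsSemidualizing R C) (h : pdLE R n M iM jM) :
    CpdLE R C n (C ⊗[R] M) inferInstance inferInstance := by
  induction n generalizing M with
  | zero => exact ⟨M, iM, jM, h, ⟨LinearEquiv.refl R _⟩⟩
  | succ n ih =>
    obtain ⟨P, iP, jP, f, hP, hf, h⟩ := h
    have hinj := hC.lTensor_injective h.hasFiniteFlatDimension (LinearMap.ker f).injective_subtype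
    have hex := lTensor_exact C f.exact_subtype_ker_map hf
    exact ⟨P, iP, jP, f.lTensor C, hP, LinearMap.lTensor_surjective C hf, (ih h).congr
      ((LinearEquiv.ofInjective _ hinj).trans (LinearEquiv.ofEq _ _ hex.linearMap_ker_eq.symm))⟩

lemma IsSemidualizing.cpdLE_of_idLE (hC : IsSemidualizing R C)
    (hid : HasInjectiveDimensionLE (ModuleCat.of R C) n) [Module.Finite R M]
    (h : idLE R m M iM jM) : CpdLE R C n M iM jM := by
  have := hC.1
  have := Module.finitePresentation_of_finite R C
  have hdual := h.hasFiniteFlatDimension_characterModule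
  have pd_hom : pdLE R n (C →ₗ[R] M) inferInstance inferInstance :=
    pdLE_of_hasInjectiveDimensionLE_characterModule
      ((ModuleCat.hasInjectiveDimensionLE_iff_of_linearEquiv
        (LinearEquiv.ofBijective _ (homEvaluation_bijective C M)) n).1
        (hC.hasInjectiveDimensionLE_tensorProduct hid hdual))
  exact (hC.cpdLE_tensorProduct pd_hom).congr (LinearEquiv.ofBijective _
    (tensorHomCounit_bijective_iff.2 (hC.isAuslander hdual).unit_bijective))

lemma IsSemidualizing.cidLE_of_pdLE (hC : IsSemidualizing R C)
    (hid : HasInjectiveDimensionLE (ModuleCat.of R C) n) (h : pdLE R m M iM jM) :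
    CidLE R C n M iM jM :=
  have hA := hC.isAuslander h.hasFiniteFlatDimension
  .of_idLE (idLE_iff_hasInjectiveDimensionLE.2
    (hC.hasInjectiveDimensionLE_tensorProduct hid h.hasFiniteFlatDimension))
    hA.subsingleton_ext (LinearEquiv.ofBijective _ hA.unit_bijective)

end Duality

theorem omega_pd_id_duality_general (R : Type) [CommRing R] [IsNoetherianRing R]
    (ω : Type) [AddCommGroup ω] [Module R ω] (hω : IsSemidualizing R ω)
    (hωid : ∃ n : ℕ, idLE R n ω inferInstance inferInstance)
    (M : Type) [AddCommGroup M] [Module R M] [Module.Finite R M] :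
    ((∃ n : ℕ, CpdLE R ω n M inferInstance inferInstance) ↔
      (∃ n : ℕ, idLE R n M inferInstance inferInstance)) ∧
    ((∃ n : ℕ, CidLE R ω n M inferInstance inferInstance) ↔
      (∃ n : ℕ, pdLE R n M inferInstance inferInstance)) := by
  obtain ⟨n, hn⟩ := hωid
  have hid := idLE_iff_hasInjectiveDimensionLE.1 hn
  have := hω.1
  refine ⟨⟨?_, ?_⟩, ⟨?_, ?_⟩⟩ <;> rintro ⟨m, h⟩ <;> refine ⟨n, ?_⟩
  · exact idLE_iff_hasInjectiveDimensionLE.2 (h.hasInjectiveDimensionLE hid)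
  · exact hω.cpdLE_of_idLE hid h
  · exact pdLE_of_hasInjectiveDimensionLE_characterModule
      (h.hasInjectiveDimensionLE_characterModule hid)
  · exact hω.cidLE_of_pdLE hid h

/-- Let `R` be a Cohen–Macaulay local ring with canonical (dualizing) module `ω`, i.e. a
semidualizing module of finite injective dimension.  A finitely generated module `M` has
finite `ω`-projective dimension iff it has finite injective dimension, and finite
`ω`-injective dimension iff it has finite projective dimension. -/
theorem omega_pd_id_duality (R : Type) [CommRing R] [IsNoetherianRing R] [IsLocalRing R]
    (hCM : (rdepth R R : WithBot ℕ∞) = ringKrullDim R)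
    (ω : Type) [AddCommGroup ω] [Module R ω] (hω : IsSemidualizing R ω)
    (hωid : ∃ n : ℕ, idLE R n ω inferInstance inferInstance)
    (M : Type) [AddCommGroup M] [Module R M] [Module.Finite R M] :
    ((∃ n : ℕ, CpdLE R ω n M inferInstance inferInstance) ↔
      (∃ n : ℕ, idLE R n M inferInstance inferInstance)) ∧
    ((∃ n : ℕ, CidLE R ω n M inferInstance inferInstance) ↔
      (∃ n : ℕ, pdLE R n M inferInstance inferInstance)) :=
  omega_pd_id_duality_general R ω hω hωid M
end

section
/- Let R be a commutative noetherian local ring and C a semidualizing R-module with C-pd_R M = 0 for some nonzero finitely generated R-module M of finite C-injective dimension (i.e., M ≅ C ⊗_R P with P finitely generated projective). Then R is Gorenstein. -/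
open CategoryTheory TensorProduct

/-!
A finite coresolution of `M` by modules `Hom(C, I)` shows that `Tor_1(C, M) = 0` and that the unit
`M → Hom(C, C ⊗ M)` is an isomorphism, because `C ⊗ Hom(C, I) ≅ Hom(Hom(C, C), I) ≅ I` and
`Tor_i(C, Hom(C, I)) ≅ Hom(Ext^i(C, C), I) = 0` for `i > 0`. If `C` is a direct summand of `M`, then
the unit is an isomorphism for `C` as well, so every endomorphism of `C ⊗ C` is a scalar.
Over a local ring a finite module for which the swap `c ⊗ d ↦ d ⊗ c` is a scalar is cyclic, so
`C ≅ R`. Now the modules `Hom(C, I)` are injective, and `R` is a direct summand of a module of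
finite injective dimension.
-/

universe v u

section InjectiveModule

variable {R : Type u} {I : Type v} [CommRing R] [Small.{v} R] [AddCommGroup I] [Module R I]
  [Module.Injective R I] {A B D : Type*} [AddCommGroup A] [Module R A] [AddCommGroup B]
  [Module R B] [AddCommGroup D] [Module R D]

lemma lcomp_surjective_of_injective {f : A →ₗ[R] B} (hf : Function.Injective f) :
    Function.Surjective (LinearMap.lcomp R I f) :=
  Module.Injective.extension_property R I A B f hf

lemma exact_lcomp_of_exact_of_moduleInjective {f : A →ₗ[R] B} {g : B →ₗ[R] D}
    (hfg : Function.Exact f g) :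
    Function.Exact (LinearMap.lcomp R I g) (LinearMap.lcomp R I f) := by
  have hrange : Function.Exact f g.rangeRestrict := fun b => by
    rw [← hfg b, Subtype.ext_iff]
    rfl
  intro φ
  rw [LinearMap.exact_lcomp_of_exact_of_surjective I hrange g.surjective_rangeRestrict φ]
  constructor
  · rintro ⟨ψ, rfl⟩
    obtain ⟨χ, rfl⟩ := lcomp_surjective_of_injective (LinearMap.range g).subtype_injective ψ
    exact ⟨χ, rfl⟩
  · rintro ⟨χ, rfl⟩
    exact ⟨χ ∘ₗ (LinearMap.range g).subtype, rfl⟩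

lemma moduleInjective_linearMap_of_flat (C : Type*) [AddCommGroup C] [Module R C]
    [Module.Flat R C] : Module.Injective R (C →ₗ[R] I) where
  out X Y _ _ _ _ f hf g := by
    obtain ⟨h, hh⟩ := lcomp_surjective_of_injective (I := I)
      (Module.Flat.rTensor_preserves_injective_linearMap (M := C) f hf) (TensorProduct.lift g)
    exact ⟨TensorProduct.curry h, fun x => LinearMap.ext fun c => LinearMap.congr_fun hh (x ⊗ₜ c)⟩

end InjectiveModule

section HomEval

/-- The Hom-evaluation morphism `K ⊗ Hom(C, I) → Hom(Hom(K, C), I)`, `k ⊗ φ ↦ (g ↦ φ (g k))`. -/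
noncomputable def homEval (R K C I : Type*) [CommRing R] [AddCommGroup K] [Module R K]
    [AddCommGroup C] [Module R C] [AddCommGroup I] [Module R I] :
    K ⊗[R] (C →ₗ[R] I) →ₗ[R] ((K →ₗ[R] C) →ₗ[R] I) :=
  TensorProduct.lift ((LinearMap.llcomp R (K →ₗ[R] C) C I).flip ∘ₗ LinearMap.applyₗ)

section

variable {R : Type*} [CommRing R] {K L C I : Type*} [AddCommGroup K] [Module R K]
  [AddCommGroup L] [Module R L] [AddCommGroup C] [Module R C] [AddCommGroup I] [Module R I]

@[simp]
lemma homEval_tmul (k : K) (φ : C →ₗ[R] I) (g : K →ₗ[R] C) :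
    homEval R K C I (k ⊗ₜ φ) g = φ (g k) := rfl

variable (C I) in
lemma homEval_comp_rTensor (f : K →ₗ[R] L) :
    homEval R L C I ∘ₗ f.rTensor (C →ₗ[R] I) =
      LinearMap.lcomp R I (LinearMap.lcomp R C f) ∘ₗ homEval R K C I := by
  ext k φ g
  simp

variable (C I) in
lemma homEval_pi_bijective (ι : Type*) [Finite ι] :
    Function.Bijective (homEval R (ι → R) C I) := by
  classical
  have := Fintype.ofFinite ι
  let e : (ι → R) ⊗[R] (C →ₗ[R] I) ≃ₗ[R] (((ι → R) →ₗ[R] C) →ₗ[R] I) :=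
    TensorProduct.comm R _ _ ≪≫ₗ TensorProduct.piScalarRight R R _ ι ≪≫ₗ
      LinearMap.lsum R (fun _ => C) R ≪≫ₗ (LinearEquiv.piRing R C ι R).symm.congrLeft I R
  have he : homEval R (ι → R) C I = e.toLinearMap := by
    ext i φ g
    simp [e, Pi.single_apply, ite_smul, LinearMap.sum_apply, DFunLike.ite_apply]
  rw [he]
  exact e.bijective

end

variable {R : Type u} {K C : Type*} {I : Type v} [CommRing R] [Small.{v} R] [AddCommGroup K]
  [Module R K] [AddCommGroup C] [Module R C] [AddCommGroup I] [Module R I] [Module.Injective R I]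

lemma homEval_surjective [Module.Finite R K] : Function.Surjective (homEval R K C I) := by
  obtain ⟨n, p, hp⟩ := Module.Finite.exists_fin' R K
  have h : Function.Surjective (homEval R K C I ∘ₗ p.rTensor (C →ₗ[R] I)) := by
    rw [homEval_comp_rTensor]
    exact (lcomp_surjective_of_injective (LinearMap.lcomp_injective_of_surjective p hp)).comp
      (homEval_pi_bijective C I (Fin n)).2
  exact Function.Surjective.of_comp h

lemma homEval_bijective [Module.FinitePresentation R K] :
    Function.Bijective (homEval R K C I) := by
  obtain ⟨n, p, hp⟩ := Module.Finite.exists_fin' R K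
  have : Module.Finite R (LinearMap.ker p) :=
    Module.Finite.iff_fg.2 (Module.FinitePresentation.fg_ker p hp)
  have hι := LinearMap.exact_subtype_ker_map p
  exact LinearMap.bijective_of_surjective_of_bijective_of_right_exact
    ((LinearMap.ker p).subtype.rTensor _) (p.rTensor _) _ _ (homEval R _ C I) (homEval R _ C I)
    (homEval R K C I) (homEval_comp_rTensor C I _).symm (homEval_comp_rTensor C I _).symm
    (rTensor_exact _ hι hp)
    (exact_lcomp_of_exact_of_moduleInjective
      (LinearMap.exact_lcomp_of_exact_of_surjective C hι hp))
    homEval_surjective (homEval_pi_bijective C I (Fin n)) (LinearMap.rTensor_surjective _ hp)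
    (lcomp_surjective_of_injective (LinearMap.lcomp_injective_of_surjective p hp))

end HomEval

section ExtVanishing

open Abelian

/-- All the modules `Ext^i_R(K, C)` with `i > 0` vanish. -/
def ExtVanishing (R K C : Type u) [CommRing R] [AddCommGroup K] [Module R K]
    [AddCommGroup C] [Module R C] : Prop :=
  ∀ n : ℕ, Subsingleton (Ext (ModuleCat.of R K) (ModuleCat.of R C) (n + 1))

variable {R K C F : Type u} [CommRing R] [AddCommGroup K] [Module R K] [AddCommGroup C]
  [Module R C] [AddCommGroup F] [Module R F]

lemma ExtVanishing.ker [Module.Projective R F] (h : ExtVanishing R K C) {p : F →ₗ[R] K}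
    (hp : Function.Surjective p) : ExtVanishing R (LinearMap.ker p) C := by
  intro n
  refine subsingleton_of_forall_eq 0 fun x => ?_
  have : Projective p.shortComplexKer.X₂ := inferInstanceAs (Projective (ModuleCat.of R F))
  have := h (n + 1)
  obtain ⟨y, hy⟩ := Ext.contravariant_sequence_exact₁ (LinearMap.shortExact_shortComplexKer hp)
    (ModuleCat.of R C) x (n₁ := n + 1 + 1) (add_comm _ _)
    (Subsingleton.elim (α := Ext (ModuleCat.of R K) _ _) _ _)
  rw [← hy, y.eq_zero_of_projective, Ext.comp_zero]

lemma lcomp_subtype_ker_surjective_of_ext_one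
    (h : Subsingleton (Ext (ModuleCat.of R K) (ModuleCat.of R C) 1)) {p : F →ₗ[R] K}
    (hp : Function.Surjective p) :
    Function.Surjective (LinearMap.lcomp R C (LinearMap.ker p).subtype) := by
  intro g
  obtain ⟨x, hx⟩ := Ext.contravariant_sequence_exact₁ (LinearMap.shortExact_shortComplexKer hp)
    (ModuleCat.of R C) (Ext.mk₀ (ModuleCat.ofHom g)) (n₁ := 1) (add_zero 1)
    (Subsingleton.elim (α := Ext (ModuleCat.of R K) _ _) _ _)
  obtain ⟨g', rfl⟩ := (Ext.mk₀_bijective _ _).2 x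
  rw [Ext.mk₀_comp_mk₀] at hx
  exact ⟨g'.hom, congrArg ModuleCat.Hom.hom ((Ext.mk₀_bijective _ _).1 hx)⟩

end ExtVanishing

section TorOneVanishing

/-- `Tor_1^R(K, N) = 0`, expressed by the equivalent condition that `K ⊗ -` preserves the
injectivity of every embedding with cokernel `N`. -/
def TorOneVanishing (R K N : Type u) [CommRing R] [AddCommGroup K] [Module R K]
    [AddCommGroup N] [Module R N] : Prop :=
  ∀ ⦃A B : Type u⦄ [AddCommGroup A] [Module R A] [AddCommGroup B] [Module R B]
    (f : A →ₗ[R] B) (g : B →ₗ[R] N), Function.Injective f → Function.Exact f g →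
      Function.Surjective g → Function.Injective (f.lTensor K)

variable {R K L M H N F : Type u} [CommRing R] [AddCommGroup K] [Module R K] [AddCommGroup L]
  [Module R L] [AddCommGroup M] [Module R M] [AddCommGroup H] [Module R H] [AddCommGroup N]
  [Module R N] [AddCommGroup F] [Module R F] {i : L →ₗ[R] F} {p : F →ₗ[R] K}

lemma TorOneVanishing.of_flat_presentation [Module.Flat R F] (hip : Function.Exact i p)
    (hp : Function.Surjective p) (h : Function.Injective (i.rTensor N)) :
    TorOneVanishing R K N := fun _ _ _ _ _ _ f _ hf hfg hg =>
  lTensor_injective_of_exact_of_exact_of_rTensor_injective hip hp hfg hg h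
    (Module.Flat.lTensor_preserves_injective_linearMap f hf)

lemma TorOneVanishing.rTensor_injective (h : TorOneVanishing R K N) (hi : Function.Injective i)
    (hip : Function.Exact i p) (hp : Function.Surjective p) :
    Function.Injective (i.rTensor N) := by
  obtain ⟨G, _, _, _, q, hq⟩ : ∃ (G : Type u) (_ : AddCommGroup G) (_ : Module R G)
      (_ : Module.Flat R G) (q : G →ₗ[R] N), Function.Surjective q :=
    ⟨N →₀ R, inferInstance, inferInstance, inferInstance, Finsupp.linearCombination R id,
      Finsupp.linearCombination_id_surjective R N⟩
  have hq' := LinearMap.exact_subtype_ker_map q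
  rw [← LinearMap.lTensor_inj_iff_rTensor_inj]
  refine lTensor_injective_of_exact_of_exact_of_rTensor_injective hq' hq hip hp ?_
    (Module.Flat.lTensor_preserves_injective_linearMap i hi)
  rw [← LinearMap.lTensor_inj_iff_rTensor_inj]
  exact h _ q (LinearMap.ker q).subtype_injective hq' hq

lemma TorOneVanishing.congr_right (h : TorOneVanishing R K N) (e : M ≃ₗ[R] N) :
    TorOneVanishing R K M := fun _ _ _ _ _ _ f g hf hfg hg =>
  h f (e.toLinearMap ∘ₗ g) hf
    (fun b => by simpa using hfg b) (e.surjective.comp hg)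

/- Dimension shifting: the hypothesis on `L` says that `Tor_2(K, N) = 0`. -/
lemma TorOneVanishing.of_exact [Module.Flat R F] (hH : TorOneVanishing R K H)
    (hN : TorOneVanishing R L N) (hi : Function.Injective i) (hip : Function.Exact i p)
    (hp : Function.Surjective p) {f : M →ₗ[R] H} {g : H →ₗ[R] N} (hf : Function.Injective f)
    (hfg : Function.Exact f g) (hg : Function.Surjective g) : TorOneVanishing R K M := by
  refine .of_flat_presentation hip hp (Function.Injective.of_comp (f := f.lTensor F) ?_)
  rw [← LinearMap.coe_comp, LinearMap.lTensor_comp_rTensor, ← LinearMap.rTensor_comp_lTensor]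
  exact (hH.rTensor_injective hi hip hp).comp (hN f g hf hfg hg)

variable {C I : Type u} [AddCommGroup C] [Module R C] [AddCommGroup I] [Module R I]

lemma torOneVanishing_linearMap_of_ext_one [IsNoetherianRing R] [Module.Finite R K]
    [Module.Injective R I]
    (h : Subsingleton (Abelian.Ext (ModuleCat.of R K) (ModuleCat.of R C) 1)) :
    TorOneVanishing R K (C →ₗ[R] I) := by
  obtain ⟨n, p, hp⟩ := Module.Finite.exists_fin' R K
  refine .of_flat_presentation (LinearMap.exact_subtype_ker_map p) hp
    (Function.Injective.of_comp (f := homEval R (Fin n → R) C I) ?_)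
  have := Module.finitePresentation_of_finite R (LinearMap.ker p)
  rw [← LinearMap.coe_comp, homEval_comp_rTensor]
  exact (LinearMap.lcomp_injective_of_surjective _
    (lcomp_subtype_ker_surjective_of_ext_one h hp)).comp homEval_bijective.1

end TorOneVanishing

section HomTensorUnit

/-- The unit `M → Hom(C, C ⊗ M)`, `m ↦ (c ↦ c ⊗ m)`, of the adjunction between `C ⊗ -` and
`Hom(C, -)`. -/
def homTensorUnit (R C M : Type*) [CommRing R] [AddCommGroup C] [Module R C] [AddCommGroup M]
    [Module R M] : M →ₗ[R] C →ₗ[R] C ⊗[R] M :=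
  (TensorProduct.mk R C M).flip

section

variable {R C M N H : Type*} [CommRing R] [AddCommGroup C] [Module R C] [AddCommGroup M]
  [Module R M] [AddCommGroup N] [Module R N] [AddCommGroup H] [Module R H]

@[simp]
lemma homTensorUnit_apply (m : M) (c : C) : homTensorUnit R C M m c = c ⊗ₜ m := rfl

variable (C) in
lemma compRight_lTensor_comp_homTensorUnit (f : M →ₗ[R] N) :
    (f.lTensor C).compRight R ∘ₗ homTensorUnit R C M = homTensorUnit R C N ∘ₗ f := by
  ext m c
  simp

lemma homTensorUnit_bijective_of_retract {i : N →ₗ[R] M} {q : M →ₗ[R] N}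
    (hqi : q ∘ₗ i = LinearMap.id) (h : Function.Bijective (homTensorUnit R C M)) :
    Function.Bijective (homTensorUnit R C N) := by
  have hi : Function.Injective i := Function.LeftInverse.injective (LinearMap.congr_fun hqi)
  constructor
  · have := h.1.comp hi
    rw [← LinearMap.coe_comp, ← compRight_lTensor_comp_homTensorUnit, LinearMap.coe_comp] at this
    exact this.of_comp
  · have hq : Function.Surjective ((q.lTensor C).compRight R : (C →ₗ[R] C ⊗[R] M) →ₗ[R] _) :=
      fun g => ⟨i.lTensor C ∘ₗ g, LinearMap.ext fun c => by
        simp [← LinearMap.lTensor_comp_apply, hqi]⟩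
    have := hq.comp h.2
    rw [← LinearMap.coe_comp, compRight_lTensor_comp_homTensorUnit, LinearMap.coe_comp] at this
    exact this.of_comp

lemma exact_compRight_of_exact_of_injective_s16 {f : M →ₗ[R] H} {g : H →ₗ[R] N}
    (hf : Function.Injective f) (hfg : Function.Exact f g) :
    Function.Exact (f.compRight R : (C →ₗ[R] M) →ₗ[R] _) (g.compRight R) := by
  intro φ
  constructor
  · intro hφ
    let e := LinearEquiv.ofInjective f hf
    have hmem (c : C) : φ c ∈ LinearMap.range f := (hfg _).1 (LinearMap.congr_fun hφ c)
    refine ⟨e.symm.toLinearMap ∘ₗ φ.codRestrict _ hmem, LinearMap.ext fun c => ?_⟩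
    exact congrArg Subtype.val (e.apply_symm_apply ⟨φ c, hmem c⟩)
  · rintro ⟨ψ, rfl⟩
    exact LinearMap.ext fun c => hfg.apply_apply_eq_zero (ψ c)

lemma homTensorUnit_bijective_of_exact {f : M →ₗ[R] H} {g : H →ₗ[R] N}
    (hf : Function.Injective f) (hfg : Function.Exact f g) (hg : Function.Surjective g)
    (hCf : Function.Injective (f.lTensor C)) (hH : Function.Bijective (homTensorUnit R C H))
    (hN : Function.Injective (homTensorUnit R C N)) :
    Function.Bijective (homTensorUnit R C M) :=
  LinearMap.bijective_of_bijective_of_injective_of_left_exact f g ((f.lTensor C).compRight R)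
    ((g.lTensor C).compRight R) _ _ _ (compRight_lTensor_comp_homTensorUnit C f)
    (compRight_lTensor_comp_homTensorUnit C g) hfg
    (exact_compRight_of_exact_of_injective_s16 hCf (lTensor_exact C hfg hg)) hH hN hf
    fun _ _ h => LinearMap.ext fun c => hCf (LinearMap.congr_fun h c)

end

variable {R : Type u} {C : Type*} {I : Type v} [CommRing R] [Small.{v} R] [AddCommGroup C]
  [Module R C] [Module.FinitePresentation R C] [AddCommGroup I] [Module R I]
  [Module.Injective R I]

/- By Hom-evaluation, `C ⊗ Hom(C, I) ≅ Hom(Hom(C, C), I) ≅ Hom(R, I) ≅ I`. -/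
lemma lift_applyₗ_bijective (hC : Function.Bijective (LinearMap.lsmul R C)) :
    Function.Bijective (TensorProduct.lift (LinearMap.applyₗ (R := R) (M := C) (M₂ := I))) := by
  let e : C ⊗[R] (C →ₗ[R] I) ≃ₗ[R] I :=
    LinearEquiv.ofBijective (homEval R C C I) homEval_bijective ≪≫ₗ
      (LinearEquiv.ofBijective (LinearMap.lsmul R C) hC).symm.congrLeft I R ≪≫ₗ
      LinearMap.ringLmapEquivSelf R R I
  have he : TensorProduct.lift LinearMap.applyₗ = e.toLinearMap := by
    ext c φ
    simp [e]
  rw [he]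
  exact e.bijective

/- Triangle identity: `Hom(C, ν)` is a left inverse, where `ν : C ⊗ Hom(C, I) → I` is the counit. -/
lemma homTensorUnit_linearMap_bijective (hC : Function.Bijective (LinearMap.lsmul R C)) :
    Function.Bijective (homTensorUnit R C (C →ₗ[R] I)) := by
  let ν := LinearEquiv.ofBijective _ (lift_applyₗ_bijective (I := I) hC)
  rw [← Function.Bijective.of_comp_iff' ν.congrRight.bijective]
  have hν : ν.congrRight ∘ homTensorUnit R C (C →ₗ[R] I) = id := rfl
  rw [hν]
  exact Function.bijective_id

end HomTensorUnit

section CidLE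

variable {R K C M : Type} [CommRing R] [IsNoetherianRing R] [AddCommGroup K] [Module R K]
  [AddCommGroup C] [Module R C] [AddCommGroup M] [Module R M] {n : ℕ}

lemma CidLE.torOneVanishing [Module.Finite R K] (hK : ExtVanishing R K C)
    (hM : CidLE R C n M inferInstance inferInstance) : TorOneVanishing R K M := by
  induction n generalizing K M with
  | zero =>
    obtain ⟨I, _, _, _, ⟨e⟩⟩ := hM
    exact (torOneVanishing_linearMap_of_ext_one (hK 0)).congr_right e
  | succ n ih =>
    obtain ⟨I, _, _, f, _, hf, hN⟩ := hM
    obtain ⟨m, p, hp⟩ := Module.Finite.exists_fin' R K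
    exact (torOneVanishing_linearMap_of_ext_one (hK 0)).of_exact (ih (hK.ker hp) hN)
      (LinearMap.ker p).subtype_injective (LinearMap.exact_subtype_ker_map p) hp hf
      f.exact_map_mkQ_range (Submodule.mkQ_surjective _)

lemma CidLE.homTensorUnit_bijective [Module.Finite R C]
    (hC : Function.Bijective (LinearMap.lsmul R C)) (hExt : ExtVanishing R C C)
    (hM : CidLE R C n M inferInstance inferInstance) :
    Function.Bijective (homTensorUnit R C M) := by
  have := Module.finitePresentation_of_finite R C
  induction n generalizing M with
  | zero =>
    obtain ⟨I, _, _, _, ⟨e⟩⟩ := hM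
    exact homTensorUnit_bijective_of_retract e.symm_comp (homTensorUnit_linearMap_bijective hC)
  | succ n ih =>
    obtain ⟨I, _, _, f, _, hf, hN⟩ := hM
    have hfg := f.exact_map_mkQ_range
    have hg := Submodule.mkQ_surjective (LinearMap.range f)
    exact homTensorUnit_bijective_of_exact hf hfg hg (hN.torOneVanishing hExt f _ hf hfg hg)
      (homTensorUnit_linearMap_bijective hC) (ih hN).1

end CidLE

section TensorSquare

variable {R C : Type*} [CommRing R] [AddCommGroup C] [Module R C]

/- The swap is an element of `Hom(C ⊗ C, C ⊗ C) ≅ Hom(C, Hom(C, C ⊗ C)) ≅ Hom(C, C) ≅ R`. -/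
lemma exists_forall_tmul_eq_smul_tmul (hC : Function.Surjective (LinearMap.lsmul R C))
    (hu : Function.Bijective (homTensorUnit R C C)) :
    ∃ r : R, ∀ c d : C, c ⊗ₜ[R] d = r • d ⊗ₜ c := by
  let u := LinearEquiv.ofBijective _ hu
  obtain ⟨r, hr⟩ := hC (u.symm.toLinearMap ∘ₗ TensorProduct.mk R C C)
  refine ⟨r, fun c d => ?_⟩
  have hc : r • u c = TensorProduct.mk R C C c := by
    rw [← map_smul, ← LinearEquiv.eq_symm_apply]
    exact LinearMap.congr_fun hr c
  exact (LinearMap.congr_fun hc d).symm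

lemma span_one_tmul_eq_top_of_tmul_eq_smul_tmul {r : R} (h : ∀ c d : C, c ⊗ₜ[R] d = r • d ⊗ₜ c)
    {k : Type*} [Field k] [Algebra R k] {β : C →ₗ[R] k} {v : C} (hv : β v ≠ 0) :
    Submodule.span k {(1 : k) ⊗ₜ[R] v} = ⊤ := by
  have hβ (c : C) : β v ⊗ₜ[R] c = (r • β c) • (1 : k) ⊗ₜ[R] v := by
    simpa [TensorProduct.smul_tmul'] using congrArg (β.rTensor C) (h v c)
  rw [Submodule.eq_top_iff']
  intro x
  induction x with
  | zero => exact Submodule.zero_mem _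
  | add x y hx hy => exact Submodule.add_mem _ hx hy
  | tmul a c =>
    have ha : a ⊗ₜ[R] c = (a * (β v)⁻¹) • β v ⊗ₜ[R] c := by
      rw [TensorProduct.smul_tmul', smul_eq_mul, inv_mul_cancel_right₀ hv]
    rw [ha, hβ, smul_smul]
    exact Submodule.smul_mem _ _ (Submodule.mem_span_singleton_self _)

open IsLocalRing in
lemma exists_span_singleton_eq_top_of_tmul_eq_smul_tmul [IsLocalRing R] [Module.Finite R C]
    {r : R} (h : ∀ c d : C, c ⊗ₜ[R] d = r • d ⊗ₜ c) : ∃ v : C, Submodule.span R {v} = ⊤ := by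
  let k := ResidueField R
  obtain hV | hV := subsingleton_or_nontrivial (k ⊗[R] C)
  · have := subsingleton_tensorProduct.1 hV
    exact ⟨0, Subsingleton.elim _ _⟩
  obtain ⟨α, hα⟩ := exists_ne (0 : Module.Dual k (k ⊗[R] C))
  obtain ⟨v, hv⟩ : ∃ v : C, α (1 ⊗ₜ v) ≠ 0 := by
    by_contra! hα'
    exact hα (by ext c; exact hα' c)
  refine ⟨v, map_tensorProduct_mk_eq_top.1 ?_⟩
  rw [Submodule.map_span, Set.image_singleton,
    ← Submodule.restrictScalars_span R k residue_surjective, Submodule.restrictScalars_eq_top_iff]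
  exact span_one_tmul_eq_top_of_tmul_eq_smul_tmul h
    (β := α.restrictScalars R ∘ₗ TensorProduct.mk R k C 1) hv

lemma nonempty_linearEquiv_of_span_singleton_eq_top
    (hC : Function.Injective (LinearMap.lsmul R C)) {v : C} (hv : Submodule.span R {v} = ⊤) :
    Nonempty (R ≃ₗ[R] C) := by
  rw [← LinearMap.range_toSpanSingleton, LinearMap.range_eq_top] at hv
  refine ⟨LinearEquiv.ofBijective (LinearMap.toSpanSingleton R C v) ⟨?_, hv⟩⟩
  refine fun s t hst => hC (LinearMap.ext fun c => ?_)
  obtain ⟨a, rfl⟩ := hv c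
  simpa [smul_comm _ a] using congrArg (a • ·) hst

lemma nonempty_linearEquiv_of_homTensorUnit_bijective [IsLocalRing R] [Module.Finite R C]
    (hC : Function.Bijective (LinearMap.lsmul R C))
    (hu : Function.Bijective (homTensorUnit R C C)) : Nonempty (R ≃ₗ[R] C) := by
  obtain ⟨r, hr⟩ := exists_forall_tmul_eq_smul_tmul hC.2 hu
  obtain ⟨v, hv⟩ := exists_span_singleton_eq_top_of_tmul_eq_smul_tmul hr
  exact nonempty_linearEquiv_of_span_singleton_eq_top hC.1 hv

end TensorSquare

section ProjectiveRetract

variable {R P : Type*} [CommRing R] [IsLocalRing R] [AddCommGroup P] [Module R P]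
  [Module.Projective R P] [Nontrivial P]

variable (R P) in
open IsLocalRing in
lemma exists_dual_apply_eq_one : ∃ (p : P) (φ : Module.Dual R P), φ p = 1 := by
  suffices ∃ (p : P) (φ : Module.Dual R P), IsUnit (φ p) by
    obtain ⟨p, φ, hφ⟩ := this
    exact ⟨p, (hφ.unit⁻¹ : Rˣ) • φ, hφ.val_inv_mul⟩
  by_contra! h
  obtain ⟨s, hs⟩ := Module.projective_def'.1 ‹Module.Projective R P›
  obtain ⟨p, hp⟩ := exists_ne (0 : P)
  let 𝔞 : Ideal R := Ideal.span (s p '' (s p).support)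
  have hcoord (q : P) : s p q ∈ 𝔞 := by
    by_cases hq : q ∈ (s p).support
    · exact Ideal.subset_span ⟨q, hq, rfl⟩
    · rw [Finsupp.notMem_support_iff.1 hq]
      exact 𝔞.zero_mem
  have hle : 𝔞 ≤ maximalIdeal R • 𝔞 := by
    refine Ideal.span_le.2 ?_
    rintro _ ⟨j, -, rfl⟩
    have hj : s p j = (s p).sum fun q a => s q j * a := by
      conv_lhs => rw [← LinearMap.id_apply (R := R) p, ← hs, LinearMap.comp_apply,
        Finsupp.linearCombination_apply, map_finsuppSum, Finsupp.sum_apply]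
      simp [mul_comm]
    rw [SetLike.mem_coe, hj]
    exact Submodule.sum_mem _ fun q _ => Submodule.smul_mem_smul
      ((mem_maximalIdeal _).2 (h q (Finsupp.lapply j ∘ₗ s))) (hcoord q)
  have h𝔞 : 𝔞 = ⊥ := Submodule.eq_bot_of_le_smul_of_le_jacobson_bot _ _
    (Submodule.fg_span ((s p).support.finite_toSet.image _)) hle (maximalIdeal_le_jacobson ⊥)
  refine hp ?_
  have hsp : s p = 0 := Finsupp.ext fun q => by simpa [h𝔞] using hcoord q
  rw [← LinearMap.id_apply (R := R) p, ← hs, LinearMap.comp_apply, hsp, map_zero]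

variable (R P) in
lemma exists_retract_tensorProduct (C : Type*) [AddCommGroup C] [Module R C] :
    ∃ (i : C →ₗ[R] C ⊗[R] P) (q : C ⊗[R] P →ₗ[R] C), q ∘ₗ i = LinearMap.id := by
  obtain ⟨p, φ, hφ⟩ := exists_dual_apply_eq_one R P
  refine ⟨(TensorProduct.mk R C P).flip p, (TensorProduct.rid R C).toLinearMap ∘ₗ φ.lTensor C, ?_⟩
  ext c
  simp [hφ]

end ProjectiveRetract

section InjectiveDimension

variable {R : Type} [CommRing R] {C M N : Type} [AddCommGroup C] [Module R C] [AddCommGroup M]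
  [Module R M] [AddCommGroup N] [Module R N] {n : ℕ}

lemma shortExact_mkQ_range {f : M →ₗ[R] N} (hf : Function.Injective f) :
    (ModuleCat.shortComplexOfCompEqZero (R := R) f (LinearMap.range f).mkQ
      f.exact_map_mkQ_range.linearMap_comp_eq_zero).ShortExact :=
  ModuleCat.shortComplex_shortExact _ f.exact_map_mkQ_range hf (Submodule.mkQ_surjective _)

lemma CidLE.hasInjectiveDimensionLE [Module.Flat R C]
    (hM : CidLE R C n M inferInstance inferInstance) :
    HasInjectiveDimensionLE (ModuleCat.of R M) n := by
  have hHom (I : Type) [AddCommGroup I] [Module R I] [Module.Injective R I] :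
      Injective (ModuleCat.of R (C →ₗ[R] I)) :=
    have := moduleInjective_linearMap_of_flat (R := R) (I := I) C
    Module.injective_object_of_injective_module R _
  induction n generalizing M with
  | zero =>
    obtain ⟨I, _, _, _, ⟨e⟩⟩ := hM
    exact injective_iff_hasInjectiveDimensionLT_one.1 (.of_iso e.symm.toModuleIso (hHom I))
  | succ n ih =>
    obtain ⟨I, _, _, f, _, hf, hN⟩ := hM
    exact ((shortExact_mkQ_range hf).hasInjectiveDimensionLT_X₃_iff n (hHom I)).1 (ih hN)

lemma idLE_of_hasInjectiveDimensionLE (hM : HasInjectiveDimensionLE (ModuleCat.of R M) n) :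
    idLE R n M inferInstance inferInstance := by
  induction n generalizing M with
  | zero =>
    have := injective_iff_hasInjectiveDimensionLT_one.2 hM
    exact Module.injective_module_of_injective_object R M
  | succ n ih =>
    obtain ⟨I, hI, f, hf⟩ := EnoughInjectives.presentation (ModuleCat.of R M)
    have hf' : Function.Injective f.hom := (ModuleCat.mono_iff_injective f).1 hf
    have : Injective (ModuleCat.of R I) := hI
    exact ⟨I, _, _, f.hom, Module.injective_module_of_injective_object R I, hf',
      ih (((shortExact_mkQ_range hf').hasInjectiveDimensionLT_X₃_iff n hI).2 hM)⟩

lemma CidLE.idLE_of_retract [Module.Flat R C] (hM : CidLE R C n M inferInstance inferInstance)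
    {i : N →ₗ[R] M} {q : M →ₗ[R] N} (hqi : q ∘ₗ i = LinearMap.id) :
    idLE R n N inferInstance inferInstance := by
  let retract : Retract (ModuleCat.of R N) (ModuleCat.of R M) :=
    { i := ModuleCat.ofHom i
      r := ModuleCat.ofHom q
      retract := by rw [← ModuleCat.ofHom_comp, hqi, ModuleCat.ofHom_id] }
  have := hM.hasInjectiveDimensionLE
  exact idLE_of_hasInjectiveDimensionLE (retract.hasInjectiveDimensionLT (n + 1))

end InjectiveDimension

section Semidualizing

open Limits in
lemma ext_subsingleton_of_extGroup {R : Type} [CommRing R] {M N : Type} [AddCommGroup M]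
    [Module R M] [AddCommGroup N] [Module R N] (n : ℕ)
    (h : Subsingleton (extGroup R M N (n + 1))) :
    Subsingleton (Abelian.Ext (ModuleCat.of R M) (ModuleCat.of R N) (n + 1)) := by
  let P := ProjectiveResolution.of (ModuleCat.of R M)
  have hz : IsZero ((P.complex.linearYonedaObj R (ModuleCat.of R N)).homology (n + 1)) :=
    (ModuleCat.isZero_of_subsingleton (extGroup R M N (n + 1))).of_iso
      (P.isoExt (R := R) (n + 1) (ModuleCat.of R N)).symm
  rw [← HomologicalComplex.exactAt_iff_isZero_homology,
    HomologicalComplex.exactAt_iff' _ n (n + 1) (n + 2) (by simp) (by simp),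
    ShortComplex.moduleCat_exact_iff] at hz
  refine subsingleton_of_forall_eq 0 fun e => ?_
  obtain ⟨f, hf, rfl⟩ := P.extMk_surjective e (n + 2) rfl
  obtain ⟨g, hg⟩ := hz f hf
  exact (P.extMk_eq_zero_iff f (n + 2) rfl hf n rfl).2 ⟨g, hg⟩

variable {R : Type} [CommRing R] {C M : Type} [AddCommGroup C] [Module R C] [AddCommGroup M]
  [Module R M]

lemma IsSemidualizing.extVanishing (hC : IsSemidualizing R C) : ExtVanishing R C C :=
  fun n => ext_subsingleton_of_extGroup n (hC.2.2 _ n.succ_pos)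

lemma IsSemidualizing.isGorensteinRing_of_retract [IsNoetherianRing R] [IsLocalRing R]
    (hC : IsSemidualizing R C) {n : ℕ} (hM : CidLE R C n M inferInstance inferInstance)
    {i : C →ₗ[R] M} {q : M →ₗ[R] C} (hqi : q ∘ₗ i = LinearMap.id) : IsGorensteinRing R := by
  have := hC.1
  have hu := hM.homTensorUnit_bijective hC.2.1 hC.extVanishing
  obtain ⟨e⟩ := nonempty_linearEquiv_of_homTensorUnit_bijective hC.2.1
    (homTensorUnit_bijective_of_retract hqi hu)
  have := Module.Flat.of_linearEquiv e.symm
  refine ⟨n, hM.idLE_of_retract (i := i ∘ₗ e.toLinearMap) (q := e.symm.toLinearMap ∘ₗ q) ?_⟩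
  ext
  simp [← LinearMap.comp_apply q i, hqi]

end Semidualizing

theorem gorenstein_of_Cpd_zero_general (R : Type) [CommRing R] [IsNoetherianRing R]
    [IsLocalRing R] (C : Type) [AddCommGroup C] [Module R C] (hC : IsSemidualizing R C)
    (M : Type) [AddCommGroup M] [Module R M] [Nontrivial M]
    (hM : CpdLE R C 0 M inferInstance inferInstance)
    (hCid : ∃ n : ℕ, CidLE R C n M inferInstance inferInstance) :
    IsGorensteinRing R := by
  obtain ⟨P, _, _, _, ⟨e⟩⟩ := hM
  obtain ⟨n, hn⟩ := hCid
  have : Nontrivial P := by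
    by_contra hP
    have := not_nontrivial_iff_subsingleton.1 hP
    exact not_subsingleton M e.symm.injective.subsingleton
  obtain ⟨i, q, hqi⟩ := exists_retract_tensorProduct R P C
  refine hC.isGorensteinRing_of_retract hn (i := e.toLinearMap ∘ₗ i)
    (q := q ∘ₗ e.symm.toLinearMap) ?_
  ext c
  simp [← LinearMap.comp_apply q i, hqi]

/-- **Sather-Wagstaff–Yassemi.** Let `R` be a commutative noetherian local ring, `C` a
semidualizing `R`-module, and `M` a nonzero finitely generated module with `C-pd_R M = 0`
(i.e. `M ≅ C ⊗_R P` with `P` finitely generated projective) and finite `C`-injective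
dimension.  Then `R` is Gorenstein. -/
theorem gorenstein_of_Cpd_zero (R : Type) [CommRing R] [IsNoetherianRing R] [IsLocalRing R]
    (C : Type) [AddCommGroup C] [Module R C] (hC : IsSemidualizing R C)
    (M : Type) [AddCommGroup M] [Module R M] [Module.Finite R M] [Nontrivial M]
    (hM : ∃ (P : Type) (_ : AddCommGroup P) (_ : Module R P),
      Module.Projective R P ∧ Module.Finite R P ∧
        Nonempty ((TensorProduct R C P) ≃ₗ[R] M))
    (hCid : ∃ n : ℕ, CidLE R C n M inferInstance inferInstance) :
    IsGorensteinRing R := by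
  obtain ⟨P, _, _, hP, -, e⟩ := hM
  exact gorenstein_of_Cpd_zero_general R C hC M ⟨P, _, _, hP, e⟩ hCid
end
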